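/- Let n, p ∈ ℕ. Let M : ℝ → Matrix (Fin n) (Fin p) ℝ be continuous on [0,1], let W := ∫ s in (0:ℝ)..1, M s * (M s)ᵀ be invertible, and let C ∈ Matrix (Fin n) (Fin n) ℝ be invertible. Define T : C([0,1], Fin p → ℝ) → (Fin n → ℝ) by T v = C *ᵥ (∫ s in (0:ℝ)..1, M s *ᵥ v s). Then T is a continuous linear map, the map η : (Fin n → ℝ) → C([0,1], Fin p → ℝ) sending z to the function s ↦ (M s)ᵀ *ᵥ (W⁻¹ *ᵥ (C⁻¹ *ᵥ z)) is a continuous linear map, T ∘ η = id, and consequently T is surjective. -/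

import Mathlib

open scoped Matrix

attribute [local instance] Matrix.frobeniusNormedAddCommGroup Matrix.frobeniusNormedSpace

/-!
Applying the input operator `v ↦ ∫ K v` to the control `K(·)ᴴ w` produces `W w`, where `W` is the
Gramian of the kernel `K`. When `W` and `C` are invertible, the control `K(·)ᴴ W⁻¹ C⁻¹ z` is
therefore steered to `C W W⁻¹ C⁻¹ z = z`.
-/

open MeasureTheory Set

section MulVec

variable {R X m k : Type*} [CommSemiring R] [TopologicalSpace R] [IsTopologicalSemiring R]
  [TopologicalSpace X] [Fintype k]

/-- Pointwise multiplication of vector-valued continuous functions by a continuous matrix-valued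
function `K`, as a continuous linear map. -/
def mulVecCLM [LocallyCompactSpace X] (K : C(X, Matrix m k R)) :
    C(X, k → R) →L[R] C(X, m → R) where
  toFun v := ⟨fun x ↦ K x *ᵥ v x, K.continuous.matrix_mulVec v.continuous⟩
  map_add' v w := ContinuousMap.ext fun x ↦ Matrix.mulVec_add (K x) (v x) (w x)
  map_smul' c v := ContinuousMap.ext fun x ↦ Matrix.mulVec_smul (K x) c (v x)
  cont := ContinuousMap.continuous_of_continuous_uncurry _ <|
    (K.continuous.comp continuous_snd).matrix_mulVec continuous_eval

end MulVec

theorem mulVec_inv_mulVec {R m : Type*} [CommRing R] [Fintype m] [DecidableEq m]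
    {A : Matrix m m R} (hA : IsUnit A) (z : m → R) : A *ᵥ (A⁻¹ *ᵥ z) = z := by
  rw [Matrix.mulVec_mulVec, Matrix.mul_nonsing_inv A ((Matrix.isUnit_iff_isUnit_det A).mp hA),
    Matrix.one_mulVec]

section Integral

variable {X E : Type*} (𝕜 : Type*) [RCLike 𝕜] [TopologicalSpace X] [CompactSpace X]
  [MeasurableSpace X] [BorelSpace X] [NormedAddCommGroup E] [NormedSpace ℝ E] [NormedSpace 𝕜 E]
  [CompleteSpace E] [SecondCountableTopologyEither X E] (μ : Measure X) [IsFiniteMeasure μ]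

/-- Integration against a finite measure, as a continuous linear map on the continuous functions
on a compact space. -/
noncomputable def integralCLM : C(X, E) →L[𝕜] E :=
  L1.integralCLM' 𝕜 ∘L ContinuousMap.toLp 1 μ 𝕜

theorem integralCLM_apply (f : C(X, E)) : integralCLM 𝕜 μ f = ∫ x, f x ∂μ :=
  calc integralCLM 𝕜 μ f
    _ = L1.integral (ContinuousMap.toLp 1 μ 𝕜 f) := (L1.integral_eq' 𝕜 _).symm
    _ = ∫ x, ContinuousMap.toLp 1 μ 𝕜 f x ∂μ := L1.integral_eq_integral _
    _ = ∫ x, f x ∂μ := integral_congr_ae (ContinuousMap.coeFn_toLp μ f)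

end Integral

theorem integral_mulVec_const {𝕜 X m k : Type*} [RCLike 𝕜] [Fintype m] [Fintype k]
    [TopologicalSpace X] [CompactSpace X] [MeasurableSpace X] [OpensMeasurableSpace X]
    (μ : Measure X) [IsFiniteMeasureOnCompacts μ] {A : X → Matrix m k 𝕜} (hA : Continuous A)
    (w : k → 𝕜) :
    ∫ x, A x *ᵥ w ∂μ = (∫ x, A x ∂μ) *ᵥ w :=
  (LinearMap.toContinuousLinearMap ((Matrix.mulVecBilin 𝕜 𝕜).flip w)).integral_comp_comm
    (hA.integrable_of_hasCompactSupport (.of_compactSpace A))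

theorem intervalIntegral_eq_integral_Icc_comap {E : Type*} [NormedAddCommGroup E]
    [NormedSpace ℝ E] {μ : Measure ℝ} [NullSingletonClass μ] {a b : ℝ} (hab : a ≤ b) (f : ℝ → E) :
    ∫ s in a..b, f s ∂μ = ∫ s : Icc a b, f s ∂μ.comap Subtype.val := by
  rw [intervalIntegral.integral_of_le hab, ← integral_Icc_eq_integral_Ioc,
    integral_subtype_comap measurableSet_Icc]

section Gramian

variable {𝕜 X m k : Type*} [RCLike 𝕜] [TopologicalSpace X] [Fintype m]

/-- The operator sending a vector `w` to the control `x ↦ (K x)ᴴ *ᵥ w`: the formal adjoint of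
the input operator `v ↦ ∫ K v`. -/
noncomputable def adjointControl [LocallyCompactSpace X] (K : C(X, Matrix m k 𝕜)) :
    (m → 𝕜) →L[𝕜] C(X, k → 𝕜) :=
  mulVecCLM ⟨fun x ↦ (K x)ᴴ, K.continuous.matrix_conjTranspose⟩ ∘L ContinuousLinearMap.const 𝕜 X

variable [Fintype k]

/-- The controllability Gramian `∫ K Kᴴ` of a continuous matrix kernel `K`; over `ℝ` the conjugate
transpose is the transpose. -/
noncomputable def gramian [MeasurableSpace X] (μ : Measure X) (K : C(X, Matrix m k 𝕜)) :
    Matrix m m 𝕜 :=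
  ∫ x, K x * (K x)ᴴ ∂μ

variable [CompactSpace X] [LocallyCompactSpace X] [MeasurableSpace X] [BorelSpace X]
  (μ : Measure X) [IsFiniteMeasure μ] (K : C(X, Matrix m k 𝕜))

/-- The input operator `v ↦ ∫ K v` of a continuous matrix kernel `K`, taking a control to the
state it produces. -/
noncomputable def inputOperator : C(X, k → 𝕜) →L[𝕜] (m → 𝕜) :=
  integralCLM 𝕜 μ ∘L mulVecCLM K

theorem inputOperator_apply (v : C(X, k → 𝕜)) :
    inputOperator μ K v = ∫ x, K x *ᵥ v x ∂μ :=
  integralCLM_apply 𝕜 μ (mulVecCLM K v)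

theorem inputOperator_adjointControl (w : m → 𝕜) :
    inputOperator μ K (adjointControl K w) = gramian μ K *ᵥ w :=
  calc inputOperator μ K (adjointControl K w)
    _ = ∫ x, K x *ᵥ ((K x)ᴴ *ᵥ w) ∂μ := inputOperator_apply μ K _
    _ = ∫ x, (K x * (K x)ᴴ) *ᵥ w ∂μ := by simp only [Matrix.mulVec_mulVec]
    _ = gramian μ K *ᵥ w := integral_mulVec_const μ
        (K.continuous.matrix_mul K.continuous.matrix_conjTranspose) w

theorem endpoint_map_submersion_general [DecidableEq m] (hW : IsUnit (gramian μ K))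
    {C : Matrix m m 𝕜} (hC : IsUnit C) :
    ∃ T : C(X, k → 𝕜) →L[𝕜] (m → 𝕜),
      (∀ v, T v = C *ᵥ ∫ x, K x *ᵥ v x ∂μ) ∧
      ∃ η : (m → 𝕜) →L[𝕜] C(X, k → 𝕜),
        (∀ z x, η z x = (K x)ᴴ *ᵥ ((gramian μ K)⁻¹ *ᵥ (C⁻¹ *ᵥ z))) ∧
        T.comp η = ContinuousLinearMap.id 𝕜 (m → 𝕜) ∧
        Function.Surjective T := by
  let T := C.mulVecLin.toContinuousLinearMap ∘L inputOperator μ K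
  let η := adjointControl K ∘L (gramian μ K)⁻¹.mulVecLin.toContinuousLinearMap ∘L
    C⁻¹.mulVecLin.toContinuousLinearMap
  have hTη (z : m → 𝕜) : T (η z) = z :=
    calc T (η z)
      _ = C *ᵥ (gramian μ K *ᵥ ((gramian μ K)⁻¹ *ᵥ (C⁻¹ *ᵥ z))) :=
        congrArg (C *ᵥ ·) (inputOperator_adjointControl μ K _)
      _ = C *ᵥ (C⁻¹ *ᵥ z) := by rw [mulVec_inv_mulVec hW]
      _ = z := mulVec_inv_mulVec hC z
  exact ⟨T, fun v ↦ congrArg (C *ᵥ ·) (inputOperator_apply μ K v), η, fun _ _ ↦ rfl,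
    ContinuousLinearMap.ext hTη, fun z ↦ ⟨η z, hTη z⟩⟩

end Gramian

theorem endpoint_map_submersion
    (n p : ℕ)
    (M : ℝ → Matrix (Fin n) (Fin p) ℝ)
    (hM : ContinuousOn M (Set.Icc (0:ℝ) 1))
    (W : Matrix (Fin n) (Fin n) ℝ)
    (hW : W = ∫ s in (0:ℝ)..1, M s * (M s)ᵀ)
    (hWinv : IsUnit W)
    (C : Matrix (Fin n) (Fin n) ℝ)
    (hCinv : IsUnit C) :
    ∃ T : C(Set.Icc (0:ℝ) 1, Fin p → ℝ) →L[ℝ] (Fin n → ℝ),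
      (∀ v, T v = C *ᵥ (∫ s in (0:ℝ)..1, M s *ᵥ v (Set.projIcc 0 1 zero_le_one s))) ∧
      ∃ η : (Fin n → ℝ) →L[ℝ] C(Set.Icc (0:ℝ) 1, Fin p → ℝ),
        (∀ (z : Fin n → ℝ) (s : Set.Icc (0:ℝ) 1),
          η z s = (M s)ᵀ *ᵥ (W⁻¹ *ᵥ (C⁻¹ *ᵥ z))) ∧
        T.comp η = ContinuousLinearMap.id ℝ (Fin n → ℝ) ∧
        Function.Surjective T := by
  subst hW
  simp only [intervalIntegral_eq_integral_Icc_comap zero_le_one, projIcc_val,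
    ← unitInterval.volume_def, ← Matrix.conjTranspose_eq_transpose_of_trivial] at hWinv ⊢
  exact endpoint_map_submersion_general volume ⟨_, hM.domRestrict⟩ hWinv hCinv
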